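/- arXiv:math/0702573 — 3 statements merged into one kernel-verified Lean document; each statement's English description precedes it below -/
import Mathlib

section
/- Fix n ≥ 1 and times 0 < T_1 < … < T_n with k_{j-1}(T_j,T_j) > 0 for j = 1,…,n. Then k_n(s,T_n) = 0 for every s ≥ 0, and under Assumptions A and GD, k_n(T_n+εt,T_n+εs)/γ_ε² converges, uniformly for (t,s) ∈ [0,1]² as ε → 0⁺, to k̄_n(t,s) = k̄(t,s) − Σ_{ℓ=1}^{n} k_{ℓ-1}(T_ℓ,T_ℓ) ᾱ_ℓ(t) ᾱ_ℓ(s). -/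
/-!
Conditioning on the value at `T_{j+1}` subtracts from `k_j` a rank-one kernel built from
`k_j(·, T_{j+1})`. The second-order increment of `k_n` based at `T_n` is therefore that of `k` minus
a sum of products of two first-order increments of the kernels `k_j`; dividing by `γ_ε²` and
passing to the limit term by term gives `k̄_n`. Since `k_n` vanishes as soon as one argument is
`T_n`, its second-order increment based at `T_n` is `k_n` itself.

A product of uniform limits is a uniform limit only when the limits are bounded. Boundedness of
`ρ̄_j` comes from the scaling: convergence at `t = 1` forces the increment of `k_j(·, T_{j+1})` over
`[T_n, T_n + ε]` to be `O(γ_ε)`, hence bounded near `0`, so that for a single small `ε` the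
rescaled increment is bounded on all of `[0, 1]`, and it is uniformly close to `ρ̄_j`.
-/

open MeasureTheory Filter Topology Set

noncomputable def condCov (k : ℝ → ℝ → ℝ) (T : ℕ → ℝ) : ℕ → ℝ → ℝ → ℝ
  | 0 => k
  | j + 1 => fun t s =>
      condCov k T j t s -
        condCov k T j t (T (j + 1)) / condCov k T j (T (j + 1)) (T (j + 1)) *
          condCov k T j s (T (j + 1))

noncomputable def condRec (k : ℝ → ℝ → ℝ) (T : ℕ → ℝ) (f : ℝ → ℝ → ℝ) : ℕ → ℝ → ℝ → ℝ
  | 0 => f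
  | j + 1 => fun t S =>
      condRec k T f j t S -
        condCov k T j S (T (j + 1)) / condCov k T j (T (j + 1)) (T (j + 1)) *
          condRec k T f j t (T (j + 1))

noncomputable def kbarN (k : ℝ → ℝ → ℝ) (T : ℕ → ℝ) (ρ : ℝ → ℝ → ℝ) (kbar : ℝ → ℝ → ℝ)
    (n : ℕ) (t s : ℝ) : ℝ :=
  kbar t s - ∑ ℓ ∈ Finset.range n, condCov k T ℓ (T (ℓ + 1)) (T (ℓ + 1)) *
    (condRec k T ρ ℓ t (T (ℓ + 1)) / condCov k T ℓ (T (ℓ + 1)) (T (ℓ + 1))) *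
    (condRec k T ρ ℓ s (T (ℓ + 1)) / condCov k T ℓ (T (ℓ + 1)) (T (ℓ + 1)))

open Asymptotics Bornology

section UniformConvergence

variable {ι α E : Type*} [PseudoMetricSpace E] {l : Filter ι} {s : Set α}
  {F : ι → α → E} {f : α → E}

theorem eventually_mapsTo_thickening_of_tendstoUniformlyOn (h : TendstoUniformlyOn F f l s)
    {δ : ℝ} (hδ : 0 < δ) : ∀ᶠ i in l, MapsTo (F i) s (Metric.thickening δ (f '' s)) := by
  filter_upwards [Metric.tendstoUniformlyOn_iff.1 h δ hδ] with i hi x hx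
  exact Metric.mem_thickening_iff.2 ⟨f x, mem_image_of_mem f hx, dist_comm (f x) _ ▸ hi x hx⟩

theorem isBounded_image_of_tendstoUniformlyOn (h : TendstoUniformlyOn F f l s)
    (hF : ∃ᶠ i in l, IsBounded (F i '' s)) : IsBounded (f '' s) := by
  obtain ⟨i, hFi, hfi⟩ := (hF.and_eventually (Metric.tendstoUniformlyOn_iff.1 h 1 one_pos)).exists
  refine (hFi.thickening (δ := 1)).subset ?_
  rintro _ ⟨x, hx, rfl⟩
  exact Metric.mem_thickening_iff.2 ⟨F i x, mem_image_of_mem _ hx, hfi x hx⟩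

theorem tendstoUniformlyOn_mul_of_isBounded {R : Type*} [NonUnitalSeminormedRing R]
    {F G : ι → α → R} {f g : α → R}
    (hF : TendstoUniformlyOn F f l s) (hG : TendstoUniformlyOn G g l s)
    (hf : IsBounded (f '' s)) (hg : IsBounded (g '' s)) :
    TendstoUniformlyOn (fun i x => F i x * G i x) (fun x => f x * g x) l s := by
  have hFG : TendstoUniformlyOn (fun i x => (F i x, G i x)) (fun x => (f x, g x)) l s :=
    fun u hu => ((hF.prodMk hG) u hu).diag_of_prod
  have huc := ((hf.thickening (δ := 1)).prod (hg.thickening (δ := 1))).uniformContinuousOn_smul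
  refine huc.comp_tendstoUniformlyOn_eventually ?_ (fun x hx => ?_) hFG
  · filter_upwards [eventually_mapsTo_thickening_of_tendstoUniformlyOn hF one_pos,
      eventually_mapsTo_thickening_of_tendstoUniformlyOn hG one_pos] with i hFi hGi x hx
    exact ⟨hFi hx, hGi hx⟩
  · exact ⟨Metric.self_subset_thickening one_pos _ (mem_image_of_mem f hx),
      Metric.self_subset_thickening one_pos _ (mem_image_of_mem g hx)⟩

end UniformConvergence

section Rescaling

variable {g γ r : ℝ → ℝ}

theorem isBigO_of_tendstoUniformlyOn_comp_mul_div (hγ : ∀ᶠ ε in 𝓝[>] 0, γ ε ≠ 0)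
    (h : TendstoUniformlyOn (fun ε t => g (ε * t) / γ ε) r (𝓝[>] 0) (Icc 0 1)) :
    g =O[𝓝[>] 0] γ := by
  refine isBigO_of_div_tendsto_nhds (hγ.mono fun ε hε h0 => absurd h0 hε) (r 1) ?_
  simpa [Pi.div_def] using h.tendsto_at (right_mem_Icc.2 zero_le_one)

theorem isBounded_image_of_tendstoUniformlyOn_comp_mul_div
    (hγ : ∀ᶠ ε in 𝓝[>] 0, γ ε ≠ 0) (hγ_bdd : γ =O[𝓝[>] 0] fun _ => (1 : ℝ))
    (h : TendstoUniformlyOn (fun ε t => g (ε * t) / γ ε) r (𝓝[>] 0) (Icc 0 1)) :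
    IsBounded (r '' Icc 0 1) := by
  obtain ⟨C, hC⟩ := ((isBigO_of_tendstoUniformlyOn_comp_mul_div hγ h).trans hγ_bdd).bound
  obtain ⟨δ, hδ, hgC⟩ := mem_nhdsGT_iff_exists_Ioo_subset.1 hC
  have hg : ∀ u ∈ Ico 0 δ, ‖g u‖ ≤ max ‖g 0‖ C := by
    rintro u ⟨hu0, huδ⟩
    obtain rfl | hu := hu0.eq_or_lt
    · exact le_max_left _ _
    · exact le_max_of_le_right (by simpa using hgC ⟨hu, huδ⟩)
  refine isBounded_image_of_tendstoUniformlyOn h (Eventually.frequently ?_)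
  filter_upwards [Ioo_mem_nhdsGT hδ] with ε ⟨hε0, hεδ⟩
  refine isBounded_iff_forall_norm_le.2 ⟨max ‖g 0‖ C / ‖γ ε‖, ?_⟩
  rintro _ ⟨t, ht, rfl⟩
  rw [norm_div]
  gcongr
  exact hg _ ⟨mul_nonneg hε0.le ht.1, (mul_le_of_le_one_right hε0.le ht.2).trans_lt hεδ⟩

end Rescaling

/-- The second-order increment of `k` over the rectangle with opposite corners `(x, x)` and
`(y, z)`; for the covariance `k` of a process `X` it is the covariance of `X y - X x` and
`X z - X x`. -/
def rectIncrement {α G : Type*} [AddCommGroup G] (k : α → α → G) (x y z : α) : G :=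
  k y z - k y x - k x z + k x x

theorem rectIncrement_eq_self {α G : Type*} [AddCommGroup G] {k : α → α → G} {x : α}
    (hright : ∀ y, k y x = 0) (hleft : ∀ z, k x z = 0) : rectIncrement k x = k := by
  ext y z
  simp [rectIncrement, hright, hleft]

section Conditioning

variable {k ρ kbar : ℝ → ℝ → ℝ} {T : ℕ → ℝ}

theorem condCov_symm (hk : ∀ t s, k t s = k s t) (j : ℕ) (t s : ℝ) :
    condCov k T j t s = condCov k T j s t := by
  induction j generalizing t s with
  | zero => exact hk t s
  | succ j ih =>
    simp only [condCov]
    rw [ih t s]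
    ring

theorem condCov_succ_apply_eq_zero {j : ℕ} (h : condCov k T j (T (j + 1)) (T (j + 1)) ≠ 0)
    (s : ℝ) : condCov k T (j + 1) s (T (j + 1)) = 0 := by
  simp only [condCov]
  rw [div_mul_cancel₀ _ h, sub_self]

theorem condCov_succ_sub_condCov_succ (j : ℕ) (x y S : ℝ) :
    condCov k T (j + 1) y S - condCov k T (j + 1) x S =
      condCov k T j y S - condCov k T j x S -
        condCov k T j S (T (j + 1)) / condCov k T j (T (j + 1)) (T (j + 1)) *
          (condCov k T j y (T (j + 1)) - condCov k T j x (T (j + 1))) := by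
  simp only [condCov]
  ring

theorem rectIncrement_condCov_succ (j : ℕ) (x y z : ℝ) :
    rectIncrement (condCov k T (j + 1)) x y z =
      rectIncrement (condCov k T j) x y z -
        (condCov k T j (T (j + 1)) (T (j + 1)))⁻¹ *
          ((condCov k T j y (T (j + 1)) - condCov k T j x (T (j + 1))) *
            (condCov k T j z (T (j + 1)) - condCov k T j x (T (j + 1)))) := by
  simp only [rectIncrement, condCov]
  ring

theorem kbarN_succ (j : ℕ) (t s : ℝ) :
    kbarN k T ρ kbar (j + 1) t s =
      kbarN k T ρ kbar j t s -
        (condCov k T j (T (j + 1)) (T (j + 1)))⁻¹ *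
          (condRec k T ρ j t (T (j + 1)) * condRec k T ρ j s (T (j + 1))) := by
  simp only [kbarN, Finset.sum_range_succ]
  field_simp
  ring

variable {ι : Type*} {l : Filter ι} {A : Set ℝ} {x : ℝ} {y : ι → ℝ → ℝ} {γ : ι → ℝ}

theorem tendstoUniformlyOn_condCov_sub_div {j : ℕ} {S : ℝ}
    (hT : ∀ i < j, TendstoUniformlyOn (fun a t => (k (y a t) (T (i + 1)) - k x (T (i + 1))) / γ a)
      (fun t => ρ t (T (i + 1))) l A)
    (hS : TendstoUniformlyOn (fun a t => (k (y a t) S - k x S) / γ a) (fun t => ρ t S) l A) :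
    TendstoUniformlyOn (fun a t => (condCov k T j (y a t) S - condCov k T j x S) / γ a)
      (fun t => condRec k T ρ j t S) l A := by
  induction j generalizing S with
  | zero => exact hS
  | succ j ih =>
    have ih_le : ∀ i < j, _ := fun i hi => hT i (hi.trans j.lt_succ_self)
    have hlast := (uniformContinuous_const_smul (condCov k T j S (T (j + 1)) /
      condCov k T j (T (j + 1)) (T (j + 1)))).comp_tendstoUniformlyOn
        (ih ih_le (hT j j.lt_succ_self))
    refine ((ih ih_le hS).fun_sub hlast).congr (.of_forall fun a t _ => ?_)
    simp only [condCov_succ_sub_condCov_succ, Function.comp_apply, smul_eq_mul]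
    ring

theorem tendstoUniformlyOn_rectIncrement_condCov_div {j : ℕ}
    (hinc : ∀ i < j, TendstoUniformlyOn
      (fun a t => (condCov k T i (y a t) (T (i + 1)) - condCov k T i x (T (i + 1))) / γ a)
      (fun t => condRec k T ρ i t (T (i + 1))) l A)
    (hbdd : ∀ i < j, IsBounded ((fun t => condRec k T ρ i t (T (i + 1))) '' A))
    (hkbar : TendstoUniformlyOn
      (fun a (p : ℝ × ℝ) => rectIncrement k x (y a p.1) (y a p.2) / γ a ^ 2)
      (fun p => kbar p.1 p.2) l (A ×ˢ A)) :
    TendstoUniformlyOn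
      (fun a (p : ℝ × ℝ) => rectIncrement (condCov k T j) x (y a p.1) (y a p.2) / γ a ^ 2)
      (fun p => kbarN k T ρ kbar j p.1 p.2) l (A ×ˢ A) := by
  induction j with
  | zero => simpa [condCov, kbarN] using hkbar
  | succ j ih =>
    have hj := j.lt_succ_self
    have hfst := ((hinc j hj).comp Prod.fst).mono (fun p (hp : p ∈ A ×ˢ A) => hp.1)
    have hsnd := ((hinc j hj).comp Prod.snd).mono (fun p (hp : p ∈ A ×ˢ A) => hp.2)
    have hprod := tendstoUniformlyOn_mul_of_isBounded hfst hsnd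
      ((hbdd j hj).subset (image_subset_iff.2 fun p hp => mem_image_of_mem _ hp.1))
      ((hbdd j hj).subset (image_subset_iff.2 fun p hp => mem_image_of_mem _ hp.2))
    have hcorr := (uniformContinuous_const_smul
      (condCov k T j (T (j + 1)) (T (j + 1)))⁻¹).comp_tendstoUniformlyOn hprod
    refine (((ih (fun i hi => hinc i (hi.trans hj)) fun i hi => hbdd i (hi.trans hj)).fun_sub
      hcorr).congr (.of_forall fun a p _ => ?_)).congr_right fun p _ => ?_
    · simp only [rectIncrement_condCov_succ, Function.comp_apply, smul_eq_mul]
      ring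
    · simp only [kbarN_succ, Function.comp_apply, smul_eq_mul]

end Conditioning

theorem conditional_covariance_asymptotics_general {k : ℝ → ℝ → ℝ} {T : ℕ → ℝ} {n : ℕ}
    (hn : 1 ≤ n) (hk : ∀ t s, k t s = k s t)
    (hne : ∀ j < n, condCov k T j (T (j + 1)) (T (j + 1)) ≠ 0) :
    (∀ s, condCov k T n s (T n) = 0) ∧
    ∀ (γ : ℝ → ℝ) (ρ kbar : ℝ → ℝ → ℝ),
      (∀ᶠ ε in 𝓝[>] 0, γ ε ≠ 0) →
      γ =O[𝓝[>] 0] (fun _ => (1 : ℝ)) →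
      (∀ j < n, TendstoUniformlyOn
        (fun ε t => (k (T n + ε * t) (T (j + 1)) - k (T n) (T (j + 1))) / γ ε)
        (fun t => ρ t (T (j + 1))) (𝓝[>] 0) (Icc 0 1)) →
      TendstoUniformlyOn
        (fun ε (p : ℝ × ℝ) => rectIncrement k (T n) (T n + ε * p.1) (T n + ε * p.2) / γ ε ^ 2)
        (fun p => kbar p.1 p.2) (𝓝[>] 0) (Icc 0 1 ×ˢ Icc 0 1) →
      TendstoUniformlyOn
        (fun ε (p : ℝ × ℝ) => condCov k T n (T n + ε * p.1) (T n + ε * p.2) / γ ε ^ 2)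
        (fun p => kbarN k T ρ kbar n p.1 p.2) (𝓝[>] 0) (Icc 0 1 ×ˢ Icc 0 1) := by
  have hzero : ∀ s, condCov k T n s (T n) = 0 := by
    obtain ⟨m, rfl⟩ := Nat.exists_eq_add_of_le' hn
    exact condCov_succ_apply_eq_zero (hne m m.lt_succ_self)
  refine ⟨hzero, fun γ ρ kbar hγ hγ_bdd hρ hkbar => ?_⟩
  have hinc := fun j (hj : j < n) =>
    tendstoUniformlyOn_condCov_sub_div (fun i hi => hρ i (hi.trans hj)) (hρ j hj)
  have hbdd := fun j (hj : j < n) => isBounded_image_of_tendstoUniformlyOn_comp_mul_div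
    (g := fun u => condCov k T j (T n + u) (T (j + 1)) - condCov k T j (T n) (T (j + 1)))
    hγ hγ_bdd (hinc j hj)
  have hrect : rectIncrement (condCov k T n) (T n) = condCov k T n :=
    rectIncrement_eq_self hzero fun z => (condCov_symm hk n (T n) z).trans (hzero z)
  simpa only [hrect] using tendstoUniformlyOn_rectIncrement_condCov_div hinc hbdd hkbar

/-- The `n`-fold conditional covariance `k_n` vanishes at `T_n`; moreover, under
Assumptions A and GD, `k_n(T_n+εt, T_n+εs)/γ_ε²` converges uniformly on `[0,1]²` to
`k̄_n(t,s) = k̄(t,s) − Σ_{ℓ=1}^{n} k_{ℓ-1}(T_ℓ,T_ℓ) ᾱ_ℓ(t) ᾱ_ℓ(s) = kbarN k T ρ kbar n t s`. -/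
theorem conditional_covariance_asymptotics
    (k : ℝ → ℝ → ℝ) (T : ℕ → ℝ) (n : ℕ)
    (hn : 1 ≤ n)
    (hkcont : ContinuousOn (fun p : ℝ × ℝ => k p.1 p.2) (Ici 0 ×ˢ Ici 0))
    (hksymm : ∀ t s, k t s = k s t)
    (hT1 : 0 < T 1)
    (hTmono : ∀ j, 1 ≤ j → j + 1 ≤ n → T j < T (j + 1))
    (hpos : ∀ j < n, 0 < condCov k T j (T (j + 1)) (T (j + 1))) :
    (∀ s : ℝ, 0 ≤ s → condCov k T n s (T n) = 0) ∧
    (∀ γ : ℝ → ℝ, ∀ ρ kbar : ℝ → ℝ → ℝ,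
      (∀ ε : ℝ, 0 < ε → 0 < γ ε) →
      Tendsto γ (𝓝[>] (0:ℝ)) (𝓝 0) →
      (∀ T' : ℝ, 0 < T' → TendstoUniformlyOn
        (fun ε t => (k (T n + ε * t) T' - k (T n) T') / γ ε)
        (fun t => ρ t T') (𝓝[>] (0:ℝ)) (Icc 0 1)) →
      TendstoUniformlyOn
        (fun ε (p : ℝ × ℝ) =>
          (k (T n + ε * p.1) (T n + ε * p.2) - k (T n + ε * p.1) (T n) -
            k (T n) (T n + ε * p.2) + k (T n) (T n)) / (γ ε) ^ 2)
        (fun p => kbar p.1 p.2) (𝓝[>] (0:ℝ)) (Icc 0 1 ×ˢ Icc 0 1) →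
      TendstoUniformlyOn
        (fun ε (p : ℝ × ℝ) =>
          condCov k T n (T n + ε * p.1) (T n + ε * p.2) / (γ ε) ^ 2)
        (fun p => kbarN k T ρ kbar n p.1 p.2) (𝓝[>] (0:ℝ)) (Icc 0 1 ×ˢ Icc 0 1)) := by
  have hTmonoOn : StrictMonoOn T (Icc 1 n) :=
    strictMonoOn_of_lt_add_one ordConnected_Icc fun j _ hj hj' => hTmono j hj.1 hj'.2
  have hTpos : ∀ j < n, 0 < T (j + 1) := fun j hj =>
    hT1.trans_le (hTmonoOn.monotoneOn ⟨le_rfl, hn⟩ ⟨by omega, hj⟩ (by omega))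
  obtain ⟨hzero, hlim⟩ :=
    conditional_covariance_asymptotics_general hn hksymm fun j hj => (hpos j hj).ne'
  exact ⟨fun s _ => hzero s, fun γ ρ kbar hγ hγ0 hρ hkbar => hlim γ ρ kbar
    (eventually_mem_nhdsWithin.mono fun ε hε => (hγ ε hε).ne') (hγ0.isBigO_one ℝ)
    (fun j hj => hρ _ (hTpos j hj)) hkbar⟩
end

section
/- Let H ∈ (0,1) with H ≠ 1/2, let c, c_H be nonzero reals, and set k(t,s) = c²·min(t,s) + c_H²·k_H(t,s), where k_H(t,s) = (t^{2H} + s^{2H} − |t−s|^{2H})/2 (the covariance of c·B + c_H·B^H with B a Brownian motion and B^H an independent fractional Brownian motion). Fix T_n > 0 and let H' = min(H, 1/2) and σ_H² = c² if H > 1/2, σ_H² = c_H² if H < 1/2. Then: (i) (k(T_n+εt,T_n+εs) − k(T_n+εt,T_n) − k(T_n,T_n+εs) + k(T_n,T_n))/ε^{2H'} converges, uniformly on [0,1]² as ε → 0⁺, to σ_H²·k_{H'}(t,s); and (ii) for every T > 0, lim_{ε→0⁺} sup_{t∈[0,1]} |k(T_n+εt,T) − k(T_n,T)|/ε^{H'}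 = 0. -/
/-!
Two properties of the fractional covariance carry the argument: stationarity and self-similarity of
the increments, `incrementCov (fbmCov H) S (ε t) (ε s) = ε ^ (2 H) fbmCov H t s`, and Hölder
continuity of `fbmCov H · T` of order `min (2 H) 1`. Brownian motion is the case `H = 1/2`, so the
process is a mixture of two fractional Brownian motions with different Hurst indices. Dividing by
`ε ^ (2 H₁)`, with `H₁` the smaller index, leaves the first covariance untouched and multiplies the
second by a positive power of `ε`; and dividing by `ε ^ H₁` still leaves a positive power of `ε` in
the Hölder bound, since `H₁ < min (2 H) 1` for both indices.
-/

open MeasureTheory Filter Topology Set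

/-- The covariance function of fractional Brownian motion with Hurst index `H`. -/
noncomputable def fbmCov (H t s : ℝ) : ℝ := (t ^ (2*H) + s ^ (2*H) - |t - s| ^ (2*H)) / 2

/-- The covariance of the increments `X (S + u) - X S` and `X (S + v) - X S` of a centred process
`X` with covariance function `k`; the second difference that Assumption GD rescales. -/
def incrementCov (k : ℝ → ℝ → ℝ) (S u v : ℝ) : ℝ :=
  k (S + u) (S + v) - k (S + u) S - k S (S + v) + k S S

/-- The covariance function of a mixture of two independent fractional Brownian motions with Hurst
indices `H₁` and `H₂`; the parameters `a` and `b` are the squares of the mixing coefficients. -/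
noncomputable def mixedFbmCov (a b H₁ H₂ t s : ℝ) : ℝ :=
  a * fbmCov H₁ t s + b * fbmCov H₂ t s

section FbmCov

variable {H : ℝ}

theorem fbmCov_one_half (t s : ℝ) : fbmCov (1 / 2) t s = min t s := by
  rw [fbmCov, mul_one_div_cancel two_ne_zero, Real.rpow_one, Real.rpow_one, Real.rpow_one]
  rcases le_total t s with h | h
  · rw [min_eq_left h, abs_of_nonpos (sub_nonpos.2 h)]
    ring
  · rw [min_eq_right h, abs_of_nonneg (sub_nonneg.2 h)]
    ring

theorem mixedFbmCov_one_half_left (a b t s : ℝ) :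
    mixedFbmCov a b (1 / 2) H t s = a * min t s + b * fbmCov H t s := by
  rw [mixedFbmCov, fbmCov_one_half]

theorem mixedFbmCov_one_half_right (a b t s : ℝ) :
    mixedFbmCov a b H (1 / 2) t s = b * min t s + a * fbmCov H t s := by
  rw [mixedFbmCov, fbmCov_one_half, add_comm]

theorem fbmCov_mul_mul {ε t s : ℝ} (hε : 0 ≤ ε) (ht : 0 ≤ t) (hs : 0 ≤ s) :
    fbmCov H (ε * t) (ε * s) = ε ^ (2 * H) * fbmCov H t s := by
  rw [fbmCov, ← mul_sub, abs_mul, abs_of_nonneg hε, Real.mul_rpow hε ht, Real.mul_rpow hε hs,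
    Real.mul_rpow hε (abs_nonneg _), fbmCov]
  ring

theorem incrementCov_fbmCov (hH : H ≠ 0) (S : ℝ) {u v : ℝ} (hu : 0 ≤ u) (hv : 0 ≤ v) :
    incrementCov (fbmCov H) S u v = fbmCov H u v := by
  simp only [incrementCov, fbmCov, add_sub_add_left_eq_sub, add_sub_cancel_left,
    sub_add_cancel_left, abs_neg, sub_self, abs_zero, abs_of_nonneg hu, abs_of_nonneg hv,
    Real.zero_rpow (mul_ne_zero two_ne_zero hH)]
  ring

theorem abs_fbmCov_le {R t s : ℝ} (hH : 0 ≤ H) (ht : t ∈ Icc 0 R) (hs : s ∈ Icc 0 R) :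
    |fbmCov H t s| ≤ R ^ (2 * H) := by
  have rpow_mem : ∀ x ∈ Icc 0 R, x ^ (2 * H) ∈ Icc 0 (R ^ (2 * H)) := fun x hx =>
    ⟨Real.rpow_nonneg hx.1 _, Real.rpow_le_rpow hx.1 hx.2 (by positivity)⟩
  have hdist : |t - s| ∈ Icc 0 R := ⟨abs_nonneg _, abs_sub_le_of_nonneg_of_le ht.1 ht.2 hs.1 hs.2⟩
  have ⟨ht₀, htR⟩ := rpow_mem t ht
  have ⟨hs₀, hsR⟩ := rpow_mem s hs
  have ⟨hd₀, hdR⟩ := rpow_mem _ hdist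
  rw [fbmCov, abs_le]
  constructor <;> linarith

end FbmCov

section Holder

variable {p x y R : ℝ}

theorem abs_rpow_sub_rpow_le_abs_sub_rpow (hp₀ : 0 ≤ p) (hp₁ : p ≤ 1) (hx : 0 ≤ x) (hy : 0 ≤ y) :
    |x ^ p - y ^ p| ≤ |x - y| ^ p := by
  wlog hyx : y ≤ x generalizing x y
  · rw [abs_sub_comm, abs_sub_comm x]
    exact this hy hx (le_of_not_ge hyx)
  have hadd : x ^ p ≤ (x - y) ^ p + y ^ p := by
    simpa only [sub_add_cancel] using Real.rpow_add_le_add_rpow (sub_nonneg.2 hyx) hy hp₀ hp₁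
  rw [abs_of_nonneg (sub_nonneg.2 (Real.rpow_le_rpow hy hyx hp₀)),
    abs_of_nonneg (sub_nonneg.2 hyx)]
  exact sub_le_iff_le_add.2 hadd

theorem abs_rpow_sub_rpow_le_mul_abs_sub (hp : 1 ≤ p) (hx : x ∈ Icc 0 R) (hy : y ∈ Icc 0 R) :
    |x ^ p - y ^ p| ≤ p * R ^ (p - 1) * |x - y| := by
  have hp₀ : 0 ≤ p := zero_le_one.trans hp
  refine Convex.norm_image_sub_le_of_norm_hasDerivWithin_le
    (fun z _ => (Real.hasDerivAt_rpow_const (Or.inr hp)).hasDerivWithinAt)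
    (fun z hz => ?_) (convex_Icc 0 R) hy hx
  rw [Real.norm_of_nonneg (mul_nonneg hp₀ (Real.rpow_nonneg hz.1 _))]
  exact mul_le_mul_of_nonneg_left (Real.rpow_le_rpow hz.1 hz.2 (sub_nonneg.2 hp)) hp₀

theorem exists_abs_rpow_sub_rpow_le (hp : 0 ≤ p) (hR : 0 ≤ R) :
    ∃ C, 0 ≤ C ∧ ∀ x ∈ Icc 0 R, ∀ y ∈ Icc 0 R, |x ^ p - y ^ p| ≤ C * |x - y| ^ min p 1 := by
  rcases le_total p 1 with hp₁ | hp₁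
  · refine ⟨1, zero_le_one, fun x hx y hy => ?_⟩
    rw [min_eq_left hp₁, one_mul]
    exact abs_rpow_sub_rpow_le_abs_sub_rpow hp hp₁ hx.1 hy.1
  · refine ⟨p * R ^ (p - 1), by positivity, fun x hx y hy => ?_⟩
    rw [min_eq_right hp₁, Real.rpow_one]
    exact abs_rpow_sub_rpow_le_mul_abs_sub hp₁ hx hy

theorem exists_abs_fbmCov_sub_fbmCov_le {H : ℝ} (hH : 0 ≤ H) (hR : 0 ≤ R) :
    ∃ C, 0 ≤ C ∧ ∀ T ∈ Icc 0 R, ∀ x ∈ Icc 0 R, ∀ y ∈ Icc 0 R,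
      |fbmCov H x T - fbmCov H y T| ≤ C * |x - y| ^ min (2 * H) 1 := by
  obtain ⟨C, hC₀, hC⟩ := exists_abs_rpow_sub_rpow_le (p := 2 * H) (by positivity) hR
  refine ⟨C, hC₀, fun T hT x hx y hy => ?_⟩
  have dist_mem : ∀ z ∈ Icc 0 R, |z - T| ∈ Icc 0 R := fun z hz =>
    ⟨abs_nonneg _, abs_sub_le_of_nonneg_of_le hz.1 hz.2 hT.1 hT.2⟩
  have hnear : |x ^ (2 * H) - y ^ (2 * H)| ≤ C * |x - y| ^ min (2 * H) 1 := hC x hx y hy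
  have hfar : |(|x - T| ^ (2 * H) - |y - T| ^ (2 * H))| ≤ C * |x - y| ^ min (2 * H) 1 := by
    have hdist : |(|x - T| - |y - T|)| ≤ |x - y| := by
      simpa only [sub_sub_sub_cancel_right] using abs_abs_sub_abs_le (x - T) (y - T)
    refine (hC _ (dist_mem x hx) _ (dist_mem y hy)).trans ?_
    gcongr
  rw [abs_le] at hnear hfar ⊢
  simp only [fbmCov]
  constructor <;> linarith

end Holder

section UniformLimits

theorem tendstoUniformlyOn_of_abs_sub_le_mul_rpow {α : Type*} {F : ℝ → α → ℝ} {f : α → ℝ}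
    {s : Set α} {C r : ℝ} (hr : 0 < r)
    (hF : ∀ᶠ ε in 𝓝[>] (0 : ℝ), ∀ x ∈ s, |F ε x - f x| ≤ C * ε ^ r) :
    TendstoUniformlyOn F f (𝓝[>] (0 : ℝ)) s := by
  have hlim : Tendsto (fun ε : ℝ => C * ε ^ r) (𝓝[>] 0) (𝓝 0) := by
    have h := (Real.continuousAt_rpow_const 0 r (Or.inr hr.le)).tendsto.const_mul C
    rw [Real.zero_rpow hr.ne', mul_zero] at h
    exact h.mono_left nhdsWithin_le_nhds
  refine Metric.tendstoUniformlyOn_iff.2 fun δ hδ => ?_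
  filter_upwards [hlim.eventually_lt_const hδ, hF] with ε hεδ hε x hx
  rw [dist_comm]
  exact (hε x hx).trans_lt hεδ

theorem tendstoUniformlyOn_sub_div_rpow {f : ℝ → ℝ} {S R C r γ : ℝ} (hC : 0 ≤ C) (hr : 0 ≤ r)
    (hγ : γ < r) (hf : ∀ x ∈ Icc S (S + R), |f x - f S| ≤ C * |x - S| ^ r) :
    TendstoUniformlyOn (fun ε t => (f (S + ε * t) - f S) / ε ^ γ) 0 (𝓝[>] (0 : ℝ)) (Icc 0 R) := by
  refine tendstoUniformlyOn_of_abs_sub_le_mul_rpow (C := C * R ^ r) (sub_pos.2 hγ) ?_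
  filter_upwards [Ioc_mem_nhdsGT one_pos] with ε ⟨hε₀, hε₁⟩ t ⟨ht₀, htR⟩
  have hεt : 0 ≤ ε * t := mul_nonneg hε₀.le ht₀
  have hmem : S + ε * t ∈ Icc S (S + R) :=
    ⟨le_add_of_nonneg_right hεt,
      add_le_add_right ((mul_le_of_le_one_left ht₀ hε₁).trans htR) S⟩
  have hincr : |f (S + ε * t) - f S| ≤ C * (ε * R) ^ r := by
    refine (hf _ hmem).trans ?_
    rw [add_sub_cancel_left, abs_of_nonneg hεt]
    gcongr
  rw [Pi.zero_apply, sub_zero, abs_div, abs_of_pos (Real.rpow_pos_of_pos hε₀ γ),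
    Real.rpow_sub hε₀, ← mul_div_assoc]
  refine div_le_div_of_nonneg_right (hincr.trans_eq ?_) (Real.rpow_nonneg hε₀.le γ)
  rw [Real.mul_rpow hε₀.le (ht₀.trans htR)]
  ring

variable {H H₁ H₂ a b S T R γ : ℝ}

theorem tendstoUniformlyOn_fbmCov_sub_div_rpow (hH : 0 ≤ H) (hγ : γ < min (2 * H) 1)
    (hS : 0 ≤ S) (hT : 0 ≤ T) :
    TendstoUniformlyOn (fun ε t => (fbmCov H (S + ε * t) T - fbmCov H S T) / ε ^ γ) 0
      (𝓝[>] (0 : ℝ)) (Icc 0 R) := by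
  have hST : S ≤ max (S + R) (max S T) := (le_max_left S T).trans (le_max_right _ _)
  obtain ⟨C, hC₀, hC⟩ := exists_abs_fbmCov_sub_fbmCov_le hH (hS.trans hST)
  refine tendstoUniformlyOn_sub_div_rpow (f := (fbmCov H · T)) hC₀ (by positivity) hγ
    fun x hx => ?_
  exact hC T ⟨hT, (le_max_right S T).trans (le_max_right _ _)⟩ x
    ⟨hS.trans hx.1, hx.2.trans (le_max_left _ _)⟩ S ⟨hS, hST⟩

theorem incrementCov_mixedFbmCov_div_rpow {ε t s : ℝ} (hH₁ : H₁ ≠ 0) (hH₂ : H₂ ≠ 0) (hε : 0 < ε)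
    (ht : 0 ≤ t) (hs : 0 ≤ s) :
    incrementCov (mixedFbmCov a b H₁ H₂) S (ε * t) (ε * s) / ε ^ (2 * H₁) =
      a * fbmCov H₁ t s + b * fbmCov H₂ t s * ε ^ (2 * H₂ - 2 * H₁) := by
  have hlinear : incrementCov (mixedFbmCov a b H₁ H₂) S (ε * t) (ε * s) =
      a * incrementCov (fbmCov H₁) S (ε * t) (ε * s) +
        b * incrementCov (fbmCov H₂) S (ε * t) (ε * s) := by
    simp only [incrementCov, mixedFbmCov]
    ring
  have hεt : 0 ≤ ε * t := by positivity
  have hεs : 0 ≤ ε * s := by positivity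
  have hpow : ε ^ (2 * H₁) ≠ 0 := (Real.rpow_pos_of_pos hε _).ne'
  rw [hlinear, incrementCov_fbmCov hH₁ S hεt hεs, incrementCov_fbmCov hH₂ S hεt hεs,
    fbmCov_mul_mul hε.le ht hs, fbmCov_mul_mul hε.le ht hs, Real.rpow_sub hε]
  field_simp

theorem tendstoUniformlyOn_incrementCov_mixedFbmCov_div_rpow (hH₁ : 0 < H₁) (hH : H₁ < H₂) :
    TendstoUniformlyOn
      (fun ε p => incrementCov (mixedFbmCov a b H₁ H₂) S (ε * p.1) (ε * p.2) / ε ^ (2 * H₁))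
      (fun p => a * fbmCov H₁ p.1 p.2) (𝓝[>] (0 : ℝ)) (Icc 0 R ×ˢ Icc 0 R) := by
  have hH₂ : 0 < H₂ := hH₁.trans hH
  refine tendstoUniformlyOn_of_abs_sub_le_mul_rpow (C := |b| * R ^ (2 * H₂))
    (r := 2 * H₂ - 2 * H₁) (by linarith) ?_
  filter_upwards [self_mem_nhdsWithin] with ε (hε : 0 < ε) p ⟨hp₁, hp₂⟩
  rw [incrementCov_mixedFbmCov_div_rpow hH₁.ne' hH₂.ne' hε hp₁.1 hp₂.1, add_sub_cancel_left,
    abs_mul, abs_mul, abs_of_nonneg (Real.rpow_nonneg hε.le _)]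
  gcongr
  exact abs_fbmCov_le hH₂.le hp₁ hp₂

theorem tendstoUniformlyOn_mixedFbmCov_sub_div_rpow (hH₁ : H₁ ∈ Ioo (0 : ℝ) 1) (hH : H₁ < H₂)
    (hS : 0 ≤ S) (hT : 0 ≤ T) :
    TendstoUniformlyOn
      (fun ε t => |mixedFbmCov a b H₁ H₂ (S + ε * t) T - mixedFbmCov a b H₁ H₂ S T| / ε ^ H₁)
      (fun _ => 0) (𝓝[>] (0 : ℝ)) (Icc 0 R) := by
  obtain ⟨hH₁₀, hH₁₁⟩ := hH₁
  have hlim₁ := tendstoUniformlyOn_fbmCov_sub_div_rpow (γ := H₁) (R := R) hH₁₀.le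
    (lt_min (by linarith) hH₁₁) hS hT
  have hlim₂ := tendstoUniformlyOn_fbmCov_sub_div_rpow (H := H₂) (γ := H₁) (R := R)
    (hH₁₀.trans hH).le (lt_min (by linarith) hH₁₁) hS hT
  have hlim := ((Real.uniformContinuous_const_mul (x := a)).comp_tendstoUniformlyOn hlim₁).add
    ((Real.uniformContinuous_const_mul (x := b)).comp_tendstoUniformlyOn hlim₂)
  have hlinear (ε t : ℝ) :
      (mixedFbmCov a b H₁ H₂ (S + ε * t) T - mixedFbmCov a b H₁ H₂ S T) / ε ^ H₁ =
        a * ((fbmCov H₁ (S + ε * t) T - fbmCov H₁ S T) / ε ^ H₁) +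
          b * ((fbmCov H₂ (S + ε * t) T - fbmCov H₂ S T) / ε ^ H₁) := by
    simp only [mixedFbmCov]
    ring
  rw [Metric.tendstoUniformlyOn_iff] at hlim ⊢
  simpa only [Function.comp_apply, Pi.add_apply, Pi.zero_apply, mul_zero, add_zero,
    dist_zero_left, Real.norm_eq_abs, ← hlinear, abs_div, abs_abs] using hlim

theorem cheridito_assumptions_general (hH₁ : H₁ ∈ Ioo (0 : ℝ) 1) (hH : H₁ < H₂) (hS : 0 ≤ S) :
    TendstoUniformlyOn
      (fun ε p => incrementCov (mixedFbmCov a b H₁ H₂) S (ε * p.1) (ε * p.2) / ε ^ (2 * H₁))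
      (fun p => a * fbmCov H₁ p.1 p.2) (𝓝[>] (0 : ℝ)) (Icc 0 R ×ˢ Icc 0 R) ∧
    ∀ T : ℝ, 0 ≤ T → TendstoUniformlyOn
      (fun ε t => |mixedFbmCov a b H₁ H₂ (S + ε * t) T - mixedFbmCov a b H₁ H₂ S T| / ε ^ H₁)
      (fun _ => 0) (𝓝[>] (0 : ℝ)) (Icc 0 R) :=
  ⟨tendstoUniformlyOn_incrementCov_mixedFbmCov_div_rpow hH₁.1 hH,
    fun _ hT => tendstoUniformlyOn_mixedFbmCov_sub_div_rpow hH₁ hH hS hT⟩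

end UniformLimits

/-- Assumptions GD and A for the Cheridito mixture `c·B + c_H·B^H` of a Brownian motion and
an independent fractional Brownian motion, with `γ_ε = ε^{min(H,1/2)}`:
(i) the rescaled second difference converges uniformly to `σ_H² k_{H∧1/2}`;
(ii) the rescaled increment in the first variable tends to `0` uniformly. -/
theorem cheridito_assumptions
    (H c cH Tn : ℝ) (hH : H ∈ Ioo (0:ℝ) 1) (hH' : H ≠ 1/2)
    (hc : c ≠ 0) (hcH : cH ≠ 0) (hTn : 0 < Tn) :
    (TendstoUniformlyOn
      (fun ε (p : ℝ × ℝ) =>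
        ((c^2 * min (Tn + ε * p.1) (Tn + ε * p.2) + cH^2 * fbmCov H (Tn + ε * p.1) (Tn + ε * p.2)) -
         (c^2 * min (Tn + ε * p.1) Tn + cH^2 * fbmCov H (Tn + ε * p.1) Tn) -
         (c^2 * min Tn (Tn + ε * p.2) + cH^2 * fbmCov H Tn (Tn + ε * p.2)) +
         (c^2 * min Tn Tn + cH^2 * fbmCov H Tn Tn)) / ε ^ (2 * min H (1/2)))
      (fun p => (if 1/2 < H then c^2 else cH^2) * fbmCov (min H (1/2)) p.1 p.2)
      (𝓝[>] (0:ℝ)) (Icc 0 1 ×ˢ Icc 0 1)) ∧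
    (∀ T : ℝ, 0 < T → TendstoUniformlyOn
      (fun ε t =>
        |(c^2 * min (Tn + ε * t) T + cH^2 * fbmCov H (Tn + ε * t) T) -
         (c^2 * min Tn T + cH^2 * fbmCov H Tn T)| / ε ^ (min H (1/2)))
      (fun _ => 0) (𝓝[>] (0:ℝ)) (Icc 0 1)) := by
  rcases hH'.lt_or_gt with h | h
  · simp only [← mixedFbmCov_one_half_right, min_eq_left h.le, if_neg h.not_gt]
    exact (cheridito_assumptions_general hH h hTn.le).imp_right fun hlim T hT => hlim T hT.le
  · simp only [← mixedFbmCov_one_half_left, min_eq_right h.le, if_pos h]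
    exact (cheridito_assumptions_general ⟨one_half_pos, one_half_lt_one⟩ h hTn.le).imp_right
      fun hlim T hT => hlim T hT.le
end

section
/- Let κ : [0,∞)×[0,∞) → ℝ be continuous, k(t,s) = ∫_0^t ∫_0^s κ(u,v) du dv, fix T_n > 0 and α ∈ (0,1]. Suppose: (i) there are a constant e and ĝ ∈ L¹([0,1]²) such that ‖κ(T_n+ε·, T_n+ε·) − κ(T_n,T_n) − ε·e·(u+v) − ε^{1+α} ĝ‖_{L¹([0,1]²)} = o(ε^{1+α}) as ε → 0⁺; and (ii) for every T > 0 there are a constant f(T) and g̃(·;T) ∈ L¹([0,1]) such that ‖∫_0^T κ(T_n+ε·, v) dv − ∫_0^T κ(T_n,v) dv − ε·u·f(T) − ε^{1+α} g̃(·;T)‖_{L¹([0,1])} = o(ε^{1+α}) as ε → 0⁺. Then, with φ̄(t,s) = ∫_0^t ∫_0^s ĝ(u,v) du dv and ψ̄(t;T) = ∫_0^t g̃(u;T) du: (a) k(T_n+εt,T_n+εs) − k(T_n+εt,T_n) − k(T_n,T_n+εs) + k(T_n,T_n) = ε²[κ(T_n,T_n)·ts + (e/2)(t²s+ts²)ε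 + φ̄(t,s)ε^{1+α} + R¹_ε(t,s)] with sup_{t,s∈[0,1]} |R¹_ε(t,s)|/ε^{1+α} → 0; and (b) for every T > 0, k(T_n+εt,T) − k(T_n,T) = ε[(∫_0^T κ(T_n,v)dv)·t + (f(T)/2)·t²·ε + ψ̄(t;T)ε^{1+α} + R²_ε(t;T)] with sup_{t∈[0,1]} |R²_ε(t;T)|/ε^{1+α} → 0. That is, Assumption R2 holds with a² = κ(T_n,T_n), b = e/2, c(T) = ∫_0^T κ(T_n,v)dv and d(T) = f(T)/2. -/
/-!
Integration over a subset of `S` is a contraction from `L¹(S)` to `ℝ`, so an `L¹` expansion of the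
integrand turns into an expansion of its integrals that is uniform over any family of subsets. After
the change of variables `u ↦ Tₙ + ε u`, the first and second differences of `k` at `Tₙ` are `ε` and
`ε²` times integrals over `(0, t]` and `(0, t] × (0, s]`, and the affine part of the expansion
integrates to the polynomial part of Assumption R2. In the general version a positive gauge `r ε`
takes the place of `ε ^ (1 + α)`.
-/

open MeasureTheory Filter Topology Set

/-- The covariance function `k(t,s) = ∫_0^t ∫_0^s κ(u,v) dv du` of the integrated Gaussian
process `X_t = ∫_0^t Z_u du`, where `κ` is the covariance of `Z`. -/
noncomputable def intCov (κ : ℝ → ℝ → ℝ) (t s : ℝ) : ℝ :=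
  ∫ u in (0:ℝ)..t, ∫ v in (0:ℝ)..s, κ u v

section SetIntegral

variable {X E : Type*} [MeasurableSpace X] {μ : Measure X} [NormedAddCommGroup E] [NormedSpace ℝ E]

theorem norm_setIntegral_sub_setIntegral_le {F G : X → E} {s S : Set X}
    (hF : IntegrableOn F S μ) (hG : IntegrableOn G S μ) (hs : s ⊆ S) :
    ‖(∫ x in s, F x ∂μ) - ∫ x in s, G x ∂μ‖ ≤ ∫ x in S, ‖F x - G x‖ ∂μ := by
  rw [← integral_sub (hF.mono_set hs) (hG.mono_set hs)]
  exact (norm_integral_le_integral_norm _).trans <| setIntegral_mono_set (hF.sub hG).norm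
    (Eventually.of_forall fun _ => norm_nonneg _) hs.eventuallyLE

theorem tendstoUniformlyOn_setIntegral_remainder {ι β : Type*} {l : Filter ι} {r : ι → ℝ}
    {F P : ι → X → ℝ} {g : X → ℝ} {S : Set X} {s : β → Set X} {D : Set β}
    (hr : ∀ᶠ i in l, 0 < r i) (hF : ∀ᶠ i in l, IntegrableOn (F i) S μ)
    (hP : ∀ᶠ i in l, IntegrableOn (P i) S μ) (hg : IntegrableOn g S μ) (hs : ∀ x ∈ D, s x ⊆ S)
    (hlim : Tendsto (fun i => (∫ y in S, |F i y - P i y - r i * g y| ∂μ) / r i) l (𝓝 0)) :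
    TendstoUniformlyOn
      (fun i x =>
        ((∫ y in s x, F i y ∂μ) - (∫ y in s x, P i y ∂μ) - (∫ y in s x, g y ∂μ) * r i) / r i)
      (fun _ => 0) l D := by
  rw [Metric.tendstoUniformlyOn_iff]
  intro δ hδ
  filter_upwards [hr, hF, hP, hlim.eventually_lt_const hδ] with i hri hFi hPi hlt x hx
  have hgi : IntegrableOn (fun y => r i * g y) S μ := hg.const_mul (r i)
  have hsplit : (∫ y in s x, (P i y + r i * g y) ∂μ)
      = (∫ y in s x, P i y ∂μ) + (∫ y in s x, g y ∂μ) * r i := by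
    rw [integral_add (hPi.mono_set (hs x hx)) (hgi.mono_set (hs x hx)), integral_const_mul,
      mul_comm (r i)]
  have hle := norm_setIntegral_sub_setIntegral_le hFi (hPi.add hgi) (hs x hx)
  simp only [Pi.add_apply, hsplit, ← sub_sub, Real.norm_eq_abs] at hle
  rw [dist_zero_left, Real.norm_eq_abs, abs_div, abs_of_pos hri]
  exact (div_le_div_of_nonneg_right hle hri.le).trans_lt hlt

end SetIntegral

section IntervalIntegral

variable {E : Type*} [NormedAddCommGroup E] [NormedSpace ℝ E]

theorem intervalIntegral_intervalIntegral_eq_setIntegral {F : ℝ × ℝ → E} {a b c d : ℝ}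
    (hab : a ≤ b) (hcd : c ≤ d) (hF : IntegrableOn F (Ioc a b ×ˢ Ioc c d)) :
    (∫ u in a..b, ∫ v in c..d, F (u, v)) = ∫ p in Ioc a b ×ˢ Ioc c d, F p := by
  rw [Measure.volume_eq_prod] at hF ⊢
  simp only [setIntegral_prod F hF, intervalIntegral.integral_of_le hab,
    intervalIntegral.integral_of_le hcd]

theorem intervalIntegral_add_mul (f : ℝ → E) (a ε t : ℝ) :
    (∫ x in a..(a + ε * t), f x) = ε • ∫ u in (0:ℝ)..t, f (a + ε * u) := by
  rw [intervalIntegral.smul_integral_comp_add_mul, mul_zero, add_zero]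

theorem intervalIntegrable_intervalIntegral_of_continuousOn {F : ℝ → ℝ → E} {a b c d : ℝ}
    (hF : ContinuousOn (fun p : ℝ × ℝ => F p.1 p.2) (uIcc a b ×ˢ uIcc c d)) :
    IntervalIntegrable (fun u => ∫ v in c..d, F u v) volume a b := by
  have hint : IntegrableOn (fun p : ℝ × ℝ => F p.1 p.2) (uIoc a b ×ˢ uIoc c d) :=
    (hF.integrableOn_compact (isCompact_uIcc.prod isCompact_uIcc)).mono_set
      (prod_mono uIoc_subset_uIcc uIoc_subset_uIcc)
  rw [IntegrableOn, Measure.volume_eq_prod, ← Measure.prod_restrict] at hint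
  simp only [intervalIntegrable_iff, intervalIntegral.intervalIntegral_eq_integral_uIoc]
  exact hint.integral_prod_left.smul _

theorem integral_affine (A B t : ℝ) :
    (∫ u in (0:ℝ)..t, (A + B * u)) = A * t + B / 2 * t ^ 2 := by
  rw [intervalIntegral.integral_add (by simp) (Continuous.intervalIntegrable (by fun_prop) _ _),
    intervalIntegral.integral_const_mul, integral_id, intervalIntegral.integral_const, smul_eq_mul]
  ring

theorem integral_integral_affine (A B t s : ℝ) :
    (∫ u in (0:ℝ)..t, ∫ v in (0:ℝ)..s, (A + B * (u + v)))
      = A * (t * s) + B / 2 * (t ^ 2 * s + t * s ^ 2) := by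
  have hinner (u : ℝ) : (∫ v in (0:ℝ)..s, (A + B * (u + v)))
      = (A * s + B / 2 * s ^ 2) + B * s * u := by
    simp only [mul_add, ← add_assoc, integral_affine (A + B * u)]
    ring
  simp only [hinner, integral_affine]
  ring

end IntervalIntegral

section Primitive

variable {ι : Type*} {l : Filter ι} {r A B : ι → ℝ}

theorem tendstoUniformlyOn_integral_affine_remainder {F : ι → ℝ → ℝ} {g : ℝ → ℝ} {b : ℝ}
    (hr : ∀ᶠ i in l, 0 < r i) (hF : ∀ᶠ i in l, IntegrableOn (F i) (Icc 0 b))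
    (hg : IntegrableOn g (Icc 0 b))
    (hlim : Tendsto (fun i => (∫ u in Icc 0 b, |F i u - A i - B i * u - r i * g u|) / r i)
      l (𝓝 0)) :
    TendstoUniformlyOn
      (fun i t => ((∫ u in (0:ℝ)..t, F i u) - A i * t - B i / 2 * t ^ 2 -
        (∫ u in (0:ℝ)..t, g u) * r i) / r i)
      (fun _ => 0) l (Icc 0 b) := by
  have hP (i : ι) : IntegrableOn (fun u => A i + B i * u) (Icc 0 b) :=
    Continuous.integrableOn_Icc (by fun_prop)
  have hsub (t : ℝ) (ht : t ∈ Icc 0 b) : Ioc 0 t ⊆ Icc 0 b :=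
    Ioc_subset_Icc_self.trans (Icc_subset_Icc_right ht.2)
  refine (tendstoUniformlyOn_setIntegral_remainder hr hF (.of_forall hP) hg hsub
    (by simpa only [sub_sub] using hlim)).congr (.of_forall fun i t ht => ?_)
  simp only [← intervalIntegral.integral_of_le ht.1, integral_affine, ← sub_sub]

theorem tendstoUniformlyOn_integral_integral_affine_remainder {F : ι → ℝ × ℝ → ℝ} {g : ℝ × ℝ → ℝ}
    {b c : ℝ} (hr : ∀ᶠ i in l, 0 < r i) (hF : ∀ᶠ i in l, IntegrableOn (F i) (Icc 0 b ×ˢ Icc 0 c))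
    (hg : IntegrableOn g (Icc 0 b ×ˢ Icc 0 c))
    (hlim : Tendsto (fun i => (∫ p in Icc 0 b ×ˢ Icc 0 c,
      |F i p - A i - B i * (p.1 + p.2) - r i * g p|) / r i) l (𝓝 0)) :
    TendstoUniformlyOn
      (fun i (p : ℝ × ℝ) => ((∫ u in (0:ℝ)..p.1, ∫ v in (0:ℝ)..p.2, F i (u, v)) -
        A i * (p.1 * p.2) - B i / 2 * (p.1 ^ 2 * p.2 + p.1 * p.2 ^ 2) -
        (∫ u in (0:ℝ)..p.1, ∫ v in (0:ℝ)..p.2, g (u, v)) * r i) / r i)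
      (fun _ => 0) l (Icc 0 b ×ˢ Icc 0 c) := by
  have hP (i : ι) :
      IntegrableOn (fun p : ℝ × ℝ => A i + B i * (p.1 + p.2)) (Icc 0 b ×ˢ Icc 0 c) :=
    ContinuousOn.integrableOn_compact (isCompact_Icc.prod isCompact_Icc) (by fun_prop)
  have hsub (p : ℝ × ℝ) (hp : p ∈ Icc 0 b ×ˢ Icc 0 c) :
      Ioc 0 p.1 ×ˢ Ioc 0 p.2 ⊆ Icc 0 b ×ˢ Icc 0 c :=
    prod_mono (Ioc_subset_Icc_self.trans (Icc_subset_Icc_right hp.1.2))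
      (Ioc_subset_Icc_self.trans (Icc_subset_Icc_right hp.2.2))
  refine (tendstoUniformlyOn_setIntegral_remainder hr hF (.of_forall hP) hg hsub
    (by simpa only [sub_sub] using hlim)).congr ?_
  filter_upwards [hF] with i hFi p hp
  have hrect {G : ℝ × ℝ → ℝ} (hG : IntegrableOn G (Icc 0 b ×ˢ Icc 0 c)) :
      (∫ q in Ioc 0 p.1 ×ˢ Ioc 0 p.2, G q) = ∫ u in (0:ℝ)..p.1, ∫ v in (0:ℝ)..p.2, G (u, v) :=
    (intervalIntegral_intervalIntegral_eq_setIntegral hp.1.1 hp.2.1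
      (hG.mono_set (hsub p hp))).symm
  simp only [hrect hFi, hrect (hP i), hrect hg, integral_integral_affine, ← sub_sub]

end Primitive

section IntCov

variable {κ : ℝ → ℝ → ℝ} {a b c d ε t s : ℝ}

theorem intCov_sub_intCov_left
    (hκ : ContinuousOn (fun p : ℝ × ℝ => κ p.1 p.2) (Ici 0 ×ˢ Ici 0))
    (ha : 0 ≤ a) (hb : 0 ≤ b) (hs : 0 ≤ s) :
    intCov κ b s - intCov κ a s = ∫ u in a..b, ∫ v in (0:ℝ)..s, κ u v := by
  have hint {x : ℝ} (hx : 0 ≤ x) :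
      IntervalIntegrable (fun u => ∫ v in (0:ℝ)..s, κ u v) volume 0 x :=
    intervalIntegrable_intervalIntegral_of_continuousOn <| hκ.mono <| prod_mono
      (ordConnected_Ici.uIcc_subset self_mem_Ici hx) (ordConnected_Ici.uIcc_subset self_mem_Ici hs)
  exact intervalIntegral.integral_interval_sub_left (hint hb) (hint ha)

theorem intCov_secondDifference
    (hκ : ContinuousOn (fun p : ℝ × ℝ => κ p.1 p.2) (Ici 0 ×ˢ Ici 0))
    (ha : 0 ≤ a) (hb : 0 ≤ b) (hc : 0 ≤ c) (hd : 0 ≤ d) :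
    intCov κ b d - intCov κ b c - intCov κ a d + intCov κ a c
      = ∫ u in a..b, ∫ v in c..d, κ u v := by
  have huIcc {x y : ℝ} (hx : 0 ≤ x) (hy : 0 ≤ y) : uIcc x y ⊆ Ici 0 :=
    ordConnected_Ici.uIcc_subset hx hy
  have hint {x : ℝ} (hx : 0 ≤ x) :
      IntervalIntegrable (fun u => ∫ v in (0:ℝ)..x, κ u v) volume a b :=
    intervalIntegrable_intervalIntegral_of_continuousOn <| hκ.mono <|
      prod_mono (huIcc ha hb) (huIcc le_rfl hx)
  have hslice {u x : ℝ} (hu : u ∈ uIcc a b) (hx : 0 ≤ x) :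
      IntervalIntegrable (κ u) volume 0 x :=
    (hκ.comp (f := fun v => (u, v)) (by fun_prop)
      fun v hv => ⟨huIcc ha hb hu, huIcc le_rfl hx hv⟩).intervalIntegrable
  calc intCov κ b d - intCov κ b c - intCov κ a d + intCov κ a c
      = (intCov κ b d - intCov κ a d) - (intCov κ b c - intCov κ a c) := by ring
    _ = ∫ u in a..b, ((∫ v in (0:ℝ)..d, κ u v) - ∫ v in (0:ℝ)..c, κ u v) := by
      rw [intCov_sub_intCov_left hκ ha hb hd, intCov_sub_intCov_left hκ ha hb hc,
        intervalIntegral.integral_sub (hint hd) (hint hc)]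
    _ = ∫ u in a..b, ∫ v in c..d, κ u v :=
      intervalIntegral.integral_congr fun u hu =>
        intervalIntegral.integral_interval_sub_left (hslice hu hd) (hslice hu hc)

theorem intCov_add_mul_sub
    (hκ : ContinuousOn (fun p : ℝ × ℝ => κ p.1 p.2) (Ici 0 ×ˢ Ici 0))
    (ha : 0 ≤ a) (hb : 0 ≤ a + ε * t) (hs : 0 ≤ s) :
    intCov κ (a + ε * t) s - intCov κ a s
      = ε * ∫ u in (0:ℝ)..t, ∫ v in (0:ℝ)..s, κ (a + ε * u) v := by
  rw [intCov_sub_intCov_left hκ ha hb hs, intervalIntegral_add_mul, smul_eq_mul]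

theorem intCov_secondDifference_add_mul
    (hκ : ContinuousOn (fun p : ℝ × ℝ => κ p.1 p.2) (Ici 0 ×ˢ Ici 0))
    (ha : 0 ≤ a) (hb : 0 ≤ a + ε * t) (hc : 0 ≤ c) (hd : 0 ≤ c + ε * s) :
    intCov κ (a + ε * t) (c + ε * s) - intCov κ (a + ε * t) c - intCov κ a (c + ε * s)
        + intCov κ a c
      = ε ^ 2 * ∫ u in (0:ℝ)..t, ∫ v in (0:ℝ)..s, κ (a + ε * u) (c + ε * v) := by
  rw [intCov_secondDifference hκ ha hb hc hd]
  simp only [intervalIntegral_add_mul, smul_eq_mul, intervalIntegral.integral_const_mul]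
  ring

end IntCov

theorem integrated_refined_expansion_R2_general
    {κ : ℝ → ℝ → ℝ} {Tn e : ℝ} {f r : ℝ → ℝ} {ghat : ℝ × ℝ → ℝ} {gtilde : ℝ → ℝ → ℝ}
    (hκ : ContinuousOn (fun p : ℝ × ℝ => κ p.1 p.2) (Ici 0 ×ˢ Ici 0))
    (hTn : 0 ≤ Tn) (hr : ∀ᶠ ε in 𝓝[>] 0, 0 < r ε)
    (hghat : IntegrableOn ghat (Icc 0 1 ×ˢ Icc 0 1))
    (hghat_lim : Tendsto
      (fun ε => (∫ p in Icc (0:ℝ) 1 ×ˢ Icc (0:ℝ) 1,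
        |κ (Tn + ε * p.1) (Tn + ε * p.2) - κ Tn Tn - ε * e * (p.1 + p.2) - r ε * ghat p|) / r ε)
      (𝓝[>] 0) (𝓝 0))
    (hgtilde : ∀ T : ℝ, 0 < T → IntegrableOn (fun u => gtilde u T) (Icc 0 1))
    (hgtilde_lim : ∀ T : ℝ, 0 < T → Tendsto
      (fun ε => (∫ u in Icc (0:ℝ) 1,
        |(∫ v in (0:ℝ)..T, κ (Tn + ε * u) v) - (∫ v in (0:ℝ)..T, κ Tn v) -
          ε * u * f T - r ε * gtilde u T|) / r ε)
      (𝓝[>] 0) (𝓝 0)) :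
    TendstoUniformlyOn
      (fun ε (p : ℝ × ℝ) =>
        ((intCov κ (Tn + ε * p.1) (Tn + ε * p.2) - intCov κ (Tn + ε * p.1) Tn -
            intCov κ Tn (Tn + ε * p.2) + intCov κ Tn Tn) / ε ^ 2 -
          κ Tn Tn * (p.1 * p.2) -
          e / 2 * (p.1 ^ 2 * p.2 + p.1 * p.2 ^ 2) * ε -
          (∫ u in (0:ℝ)..p.1, ∫ v in (0:ℝ)..p.2, ghat (u, v)) * r ε) / r ε)
      (fun _ => 0) (𝓝[>] 0) (Icc 0 1 ×ˢ Icc 0 1) ∧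
    ∀ T : ℝ, 0 < T → TendstoUniformlyOn
      (fun ε t =>
        ((intCov κ (Tn + ε * t) T - intCov κ Tn T) / ε -
          (∫ v in (0:ℝ)..T, κ Tn v) * t -
          f T / 2 * t ^ 2 * ε -
          (∫ u in (0:ℝ)..t, gtilde u T) * r ε) / r ε)
      (fun _ => 0) (𝓝[>] 0) (Icc 0 1) := by
  have hpos : ∀ᶠ ε in 𝓝[>] (0:ℝ), 0 < ε := self_mem_nhdsWithin
  have hshift {ε t : ℝ} (hε : 0 < ε) (ht : t ∈ Icc (0:ℝ) 1) : 0 ≤ Tn + ε * t :=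
    add_nonneg hTn (mul_nonneg hε.le ht.1)
  refine ⟨?_, fun T hT => ?_⟩
  · have hint : ∀ᶠ ε in 𝓝[>] (0:ℝ), IntegrableOn
        (fun p : ℝ × ℝ => κ (Tn + ε * p.1) (Tn + ε * p.2)) (Icc 0 1 ×ˢ Icc 0 1) :=
      hpos.mono fun ε hε => ContinuousOn.integrableOn_compact (isCompact_Icc.prod isCompact_Icc) <|
        hκ.comp (f := fun p : ℝ × ℝ => (Tn + ε * p.1, Tn + ε * p.2)) (by fun_prop)
          fun p hp => ⟨hshift hε hp.1, hshift hε hp.2⟩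
    refine (tendstoUniformlyOn_integral_integral_affine_remainder hr hint hghat hghat_lim).congr ?_
    filter_upwards [hpos] with ε hε p hp
    simp only [intCov_secondDifference_add_mul hκ hTn (hshift hε hp.1) hTn (hshift hε hp.2),
      mul_div_cancel_left₀ _ (pow_ne_zero 2 hε.ne')]
    ring
  · have hint : ∀ᶠ ε in 𝓝[>] (0:ℝ),
        IntegrableOn (fun u => ∫ v in (0:ℝ)..T, κ (Tn + ε * u) v) (Icc 0 1) := by
      filter_upwards [hpos] with ε hε
      rw [← intervalIntegrable_iff_integrableOn_Icc_of_le zero_le_one]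
      refine intervalIntegrable_intervalIntegral_of_continuousOn <|
        hκ.comp (f := fun p : ℝ × ℝ => (Tn + ε * p.1, p.2)) (by fun_prop) ?_
      rw [uIcc_of_le zero_le_one, uIcc_of_le hT.le]
      exact fun p hp => ⟨hshift hε hp.1, hp.2.1⟩
    have hlim := hgtilde_lim T hT
    simp only [mul_right_comm _ _ (f T)] at hlim
    refine (tendstoUniformlyOn_integral_affine_remainder hr hint (hgtilde T hT) hlim).congr ?_
    filter_upwards [hpos] with ε hε t ht
    simp only [intCov_add_mul_sub hκ hTn (hshift hε ht) hT.le, mul_div_cancel_left₀ _ hε.ne']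
    ring

/-- Part 2 of Proposition 4.10: if
`κ(T_n+εu,T_n+εv) = κ(T_n,T_n) + ε·e·(u+v) + ε^{1+α} ĝ(u,v) + o_{L¹}(ε^{1+α})` and
`∫_0^T κ(T_n+εu,v)dv = ∫_0^T κ(T_n,v)dv + ε·u·f(T) + ε^{1+α} g̃(u;T) + o_{L¹}(ε^{1+α})`,
then Assumption R2 holds for `k = intCov κ`, with `a² = κ(T_n,T_n)`, `b = e/2`,
`c(T) = ∫_0^T κ(T_n,v)dv`, `d(T) = f(T)/2`, `φ̄(t,s) = ∫_0^t∫_0^s ĝ` and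
`ψ̄(t;T) = ∫_0^t g̃(u;T)du`; the remainders, divided by `ε^{1+α}`, tend to `0` uniformly. -/
theorem integrated_refined_expansion_R2
    (κ : ℝ → ℝ → ℝ) (Tn α e : ℝ) (f : ℝ → ℝ) (ghat : ℝ × ℝ → ℝ) (gtilde : ℝ → ℝ → ℝ)
    (hκ : ContinuousOn (fun p : ℝ × ℝ => κ p.1 p.2) (Ici 0 ×ˢ Ici 0))
    (hTn : 0 < Tn) (hα : α ∈ Ioc (0:ℝ) 1)
    (hghat : IntegrableOn ghat (Icc 0 1 ×ˢ Icc 0 1) volume)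
    (hghat_lim : Tendsto
      (fun ε => (∫ p in (Icc (0:ℝ) 1 ×ˢ Icc (0:ℝ) 1),
        |κ (Tn + ε * p.1) (Tn + ε * p.2) - κ Tn Tn - ε * e * (p.1 + p.2) -
          ε ^ (1 + α) * ghat p|) / ε ^ (1 + α))
      (𝓝[>] (0:ℝ)) (𝓝 0))
    (hgtilde : ∀ T : ℝ, 0 < T → IntegrableOn (fun u => gtilde u T) (Icc 0 1) volume)
    (hgtilde_lim : ∀ T : ℝ, 0 < T → Tendsto
      (fun ε => (∫ u in Icc (0:ℝ) 1,
        |(∫ v in (0:ℝ)..T, κ (Tn + ε * u) v) - (∫ v in (0:ℝ)..T, κ Tn v) -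
          ε * u * f T - ε ^ (1 + α) * gtilde u T|) / ε ^ (1 + α))
      (𝓝[>] (0:ℝ)) (𝓝 0)) :
    (TendstoUniformlyOn
      (fun ε (p : ℝ × ℝ) =>
        ((intCov κ (Tn + ε * p.1) (Tn + ε * p.2) - intCov κ (Tn + ε * p.1) Tn -
            intCov κ Tn (Tn + ε * p.2) + intCov κ Tn Tn) / ε ^ 2 -
          κ Tn Tn * (p.1 * p.2) -
          e / 2 * (p.1 ^ 2 * p.2 + p.1 * p.2 ^ 2) * ε -
          (∫ u in (0:ℝ)..p.1, ∫ v in (0:ℝ)..p.2, ghat (u, v)) * ε ^ (1 + α)) / ε ^ (1 + α))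
      (fun _ => 0) (𝓝[>] (0:ℝ)) (Icc 0 1 ×ˢ Icc 0 1)) ∧
    (∀ T : ℝ, 0 < T → TendstoUniformlyOn
      (fun ε t =>
        ((intCov κ (Tn + ε * t) T - intCov κ Tn T) / ε -
          (∫ v in (0:ℝ)..T, κ Tn v) * t -
          f T / 2 * t ^ 2 * ε -
          (∫ u in (0:ℝ)..t, gtilde u T) * ε ^ (1 + α)) / ε ^ (1 + α))
      (fun _ => 0) (𝓝[>] (0:ℝ)) (Icc 0 1)) := by
  exact integrated_refined_expansion_R2_general hκ hTn.le
    (eventually_mem_nhdsWithin.mono fun _ hε => Real.rpow_pos_of_pos hε _)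
    hghat hghat_lim hgtilde hgtilde_lim
end
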